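/- arXiv:2103.17025 — 2 statements merged into one kernel-verified Lean document; each statement's English description precedes it below -/
import Mathlib

section
/- The function y ↦ log(1 + |y|²) (1 − |y|²)/(1 + |y|²)³ is integrable on ℝ² and ∫_{ℝ²} log(1 + |y|²) (1 − |y|²)/(1 + |y|²)³ dy = −π/2. -/
open MeasureTheory

lemma aux_integrable :
    Integrable (fun y : EuclideanSpace ℝ (Fin 2) =>
        Real.log (1 + ‖y‖ ^ 2) * ((1 - ‖y‖ ^ 2) / (1 + ‖y‖ ^ 2) ^ 3)) := by
  have h := (integrable_rpow_neg_one_add_norm_sq (E := EuclideanSpace ℝ (Fin 2))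
    (μ := volume) (r := 3) (by simp; norm_num)).const_mul 2
  refine h.mono' (by fun_prop) (Filter.Eventually.of_forall fun y => ?_)
  have hs : 0 ≤ ‖y‖ ^ 2 := by positivity
  generalize ‖y‖ ^ 2 = s at hs
  have hu : 0 < 1 + s := by linarith
  have hl : Real.log (1 + s) ≤ 2 * (1 + s) ^ (1 / 2 : ℝ) := by
    have := Real.log_le_rpow_div hu.le (ε := 1 / 2) (by norm_num)
    linarith
  have hl0 : 0 ≤ Real.log (1 + s) := Real.log_nonneg (by linarith)
  have hk : |(1 - s) / (1 + s) ^ 3| ≤ (1 + s) ^ (-2 : ℝ) := by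
    rw [abs_div, abs_of_pos (pow_pos hu 3), Real.rpow_neg hu.le,
      show (2 : ℝ) = ((2 : ℕ) : ℝ) by norm_num, Real.rpow_natCast, div_le_iff₀ (by positivity)]
    have : ((1 + s) ^ 2)⁻¹ * (1 + s) ^ 3 = 1 + s := by field_simp
    rw [this, abs_le]
    constructor <;> linarith
  rw [Real.norm_eq_abs, abs_mul, abs_of_nonneg hl0]
  calc _ ≤ (2 * (1 + s) ^ (1 / 2 : ℝ)) * (1 + s) ^ (-2 : ℝ) := by gcongr
    _ = _ := by rw [mul_assoc, ← Real.rpow_add hu]; norm_num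

lemma aux_deriv (x : ℝ) :
    HasDerivAt (fun x : ℝ => (1 / 2 : ℝ) * (((1 + x ^ 2)⁻¹ - ((1 + x ^ 2)⁻¹) ^ 2) *
      Real.log (1 + x ^ 2) - 1 / 2 * ((1 + x ^ 2)⁻¹) ^ 2 + (1 + x ^ 2)⁻¹))
      (x * (Real.log (1 + x ^ 2) * ((1 - x ^ 2) / (1 + x ^ 2) ^ 3))) x := by
  have hu : 1 + x ^ 2 ≠ 0 := by positivity
  have h1 : HasDerivAt (fun x : ℝ => 1 + x ^ 2) (2 * x) x := by
    simpa using (hasDerivAt_pow 2 x).const_add 1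
  have h2 := h1.fun_inv hu
  have h3 := h1.log hu
  have h4 := ((((h2.sub (h2.fun_pow 2)).mul h3).sub ((h2.fun_pow 2).const_mul (1 / 2))).add
    h2).const_mul (1 / 2)
  refine h4.congr_deriv ?_
  simp only [Pi.sub_apply, Nat.add_one_sub_one, pow_one, Nat.cast_ofNat]
  field_simp
  ring

lemma aux_tendsto :
    Filter.Tendsto (fun x : ℝ => (1 / 2 : ℝ) * (((1 + x ^ 2)⁻¹ - ((1 + x ^ 2)⁻¹) ^ 2) *
      Real.log (1 + x ^ 2) - 1 / 2 * ((1 + x ^ 2)⁻¹) ^ 2 + (1 + x ^ 2)⁻¹))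
      Filter.atTop (nhds 0) := by
  have hu : Filter.Tendsto (fun x : ℝ => 1 + x ^ 2) Filter.atTop Filter.atTop :=
    Filter.tendsto_atTop_add_const_left _ _ (Filter.tendsto_pow_atTop (by norm_num))
  have hi : Filter.Tendsto (fun u : ℝ => u⁻¹) Filter.atTop (nhds 0) := tendsto_inv_atTop_zero
  have hl : Filter.Tendsto (fun u : ℝ => Real.log u / u) Filter.atTop (nhds 0) :=
    Real.isLittleO_log_id_atTop.tendsto_div_nhds_zero
  have h := ((((hl.sub (hi.mul hl)).sub ((hi.pow 2).const_mul (1 / 2))).add hi).const_mul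
    (1 / 2)).comp hu
  convert h using 1
  · ext x
    simp only [Function.comp]
    ring
  · norm_num

/-- The function `y ↦ log(1+|y|²)(1-|y|²)/(1+|y|²)³` is integrable on `ℝ²` and its
integral equals `-π/2`. -/
theorem integral_log_kernel_plane :
    Integrable (fun y : EuclideanSpace ℝ (Fin 2) =>
        Real.log (1 + ‖y‖ ^ 2) * ((1 - ‖y‖ ^ 2) / (1 + ‖y‖ ^ 2) ^ 3)) ∧
      (∫ y : EuclideanSpace ℝ (Fin 2),
          Real.log (1 + ‖y‖ ^ 2) * ((1 - ‖y‖ ^ 2) / (1 + ‖y‖ ^ 2) ^ 3)) = -(Real.pi / 2) := by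
  refine ⟨aux_integrable, ?_⟩
  have hi := (integrable_fun_norm_addHaar (volume : Measure (EuclideanSpace ℝ (Fin 2)))
    (f := fun r : ℝ => Real.log (1 + r ^ 2) * ((1 - r ^ 2) / (1 + r ^ 2) ^ 3))).1 aux_integrable
  have he := integral_fun_norm_addHaar (volume : Measure (EuclideanSpace ℝ (Fin 2)))
    (fun r : ℝ => Real.log (1 + r ^ 2) * ((1 - r ^ 2) / (1 + r ^ 2) ^ 3))
  simp only [finrank_euclideanSpace, Fintype.card_fin, Nat.add_one_sub_one, pow_one,
    smul_eq_mul, Nat.reduceSub] at hi he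
  rw [he, integral_Ioi_of_hasDerivAt_of_tendsto' (fun x _ => aux_deriv x) hi aux_tendsto,
    Measure.real, EuclideanSpace.volume_ball_fin_two]
  simp [Real.pi_pos.le]
  ring
end

section
/- Let α ≥ 2 be an integer. Then ∫_{ℝ²} |y|^{2/α} (2|y|² − 1)/(1 + |y|²)⁴ dy > 0. -/
open MeasureTheory

lemma aux_rpow_le {s r : ℝ} (h0 : 0 < s) (h1 : s ≤ 1) (hr : 0 < r) :
    r ^ s * r ≤ 1 + r ^ 2 := by
  rcases le_total r 1 with h | h
  · have : r ^ s ≤ 1 := Real.rpow_le_one hr.le h h0.le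
    nlinarith
  · have : r ^ s ≤ r ^ (1 : ℝ) := Real.rpow_le_rpow_of_exponent_le h h1
    rw [Real.rpow_one] at this
    nlinarith

lemma aux_pos {s : ℝ} (h0 : 0 < s) (h1 : s ≤ 1) :
    0 < ∫ r in Set.Ioi (0 : ℝ), r * (r ^ s * (2 * r ^ 2 - 1) / (1 + r ^ 2) ^ 4) := by
  set f : ℝ → ℝ := fun r => r * (r ^ s * (2 * r ^ 2 - 1) / (1 + r ^ 2) ^ 4) with hf
  set g : ℝ → ℝ := fun r => s * (r ^ s * r) / (2 * (1 + r ^ 2) ^ 3) with hg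
  set H : ℝ → ℝ := fun r => r ^ s * (-r ^ 2 / (2 * (1 + r ^ 2) ^ 3)) with hH
  have hcs : Continuous fun r : ℝ => r ^ s := Real.continuous_rpow_const h0.le
  have hne : ∀ r : ℝ, (1 + r ^ 2) ≠ 0 := fun r => by positivity
  have hcf : Continuous f := by
    apply continuous_id.mul
    exact (hcs.mul (by fun_prop)).div (by fun_prop) (fun r => pow_ne_zero _ (hne r))
  have hcg : Continuous g := by
    exact (continuous_const.mul (hcs.mul continuous_id)).div (by fun_prop)
      (fun r => by positivity)
  have hcH : Continuous H := by
    apply hcs.mul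
    exact Continuous.div (by fun_prop) (by fun_prop) (fun r => by positivity)
  have hI : IntegrableOn (fun r : ℝ => 2 * (1 + r ^ 2)⁻¹) (Set.Ioi 0) :=
    (integrable_inv_one_add_sq.const_mul 2).integrableOn
  have hfi : IntegrableOn f (Set.Ioi 0) := by
    refine Integrable.mono' hI hcf.aestronglyMeasurable ?_
    refine (ae_restrict_iff' measurableSet_Ioi).2 (ae_of_all _ fun r hr => ?_)
    have hr : 0 < r := hr
    have hb := aux_rpow_le h0 h1 hr
    have hp : 0 < r ^ s := Real.rpow_pos_of_pos hr s
    have e : f r = (r ^ s * r) * (2 * r ^ 2 - 1) / (1 + r ^ 2) ^ 4 := by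
      simp only [hf]; ring
    have hab : |2 * r ^ 2 - 1| ≤ 2 * (1 + r ^ 2) := by
      rw [abs_le]; constructor <;> nlinarith
    rw [e, Real.norm_eq_abs, abs_div, abs_mul, abs_of_pos (mul_pos hp hr),
      abs_of_pos (by positivity : 0 < (1 + r ^ 2) ^ 4), ← div_eq_mul_inv,
      div_le_div_iff₀ (by positivity) (by positivity)]
    calc (r ^ s * r) * |2 * r ^ 2 - 1| * (1 + r ^ 2)
        ≤ (1 + r ^ 2) * (2 * (1 + r ^ 2)) * (1 + r ^ 2) := by gcongr
      _ = 2 * (1 + r ^ 2) ^ 3 := by ring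
      _ ≤ 2 * (1 + r ^ 2) ^ 4 := by
        gcongr
        · nlinarith
        · norm_num
  have hgi : IntegrableOn g (Set.Ioi 0) := by
    refine Integrable.mono' hI hcg.aestronglyMeasurable ?_
    refine (ae_restrict_iff' measurableSet_Ioi).2 (ae_of_all _ fun r hr => ?_)
    have hr : 0 < r := hr
    have hb := aux_rpow_le h0 h1 hr
    have hp : 0 < r ^ s := Real.rpow_pos_of_pos hr s
    rw [Real.norm_eq_abs, abs_of_nonneg (by simp only [hg]; positivity), ← div_eq_mul_inv]
    simp only [hg]
    rw [div_le_div_iff₀ (by positivity) (by positivity)]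
    calc s * (r ^ s * r) * (1 + r ^ 2)
        ≤ 1 * (1 + r ^ 2) * (1 + r ^ 2) := by gcongr
      _ = (1 + r ^ 2) ^ 2 := by ring
      _ ≤ (1 + r ^ 2) ^ 3 := by
        gcongr
        · nlinarith
        · norm_num
      _ ≤ 2 * (2 * (1 + r ^ 2) ^ 3) := by
        have : 0 < (1 + r ^ 2) ^ 3 := by positivity
        linarith
  have hd : ∀ r ∈ Set.Ioi (0 : ℝ), HasDerivAt H (f r - g r) r := by
    intro r hr
    have hr : 0 < r := hr
    have d1 : HasDerivAt (fun r : ℝ => r ^ s) (s * r ^ (s - 1)) r :=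
      Real.hasDerivAt_rpow_const (Or.inl hr.ne')
    have d2 : HasDerivAt (fun r : ℝ => -r ^ 2) (-(2 * r)) r := by
      exact (hasDerivAt_pow 2 r).neg.congr_deriv (by norm_num)
    have d3 : HasDerivAt (fun r : ℝ => 2 * (1 + r ^ 2) ^ 3)
        (2 * (3 * (1 + r ^ 2) ^ 2 * (2 * r))) r := by
      simpa using (((hasDerivAt_pow 2 r).const_add 1).pow 3).const_mul 2
    have := d1.mul (d2.div d3 (by positivity))
    refine this.congr_deriv ?_
    simp only [hf, hg, Pi.div_apply]
    rw [Real.rpow_sub_one hr.ne']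
    field_simp
    ring
  have ht : Filter.Tendsto H Filter.atTop (nhds 0) := by
    have h3 : Filter.Tendsto (fun r : ℝ => r⁻¹) Filter.atTop (nhds 0) := tendsto_inv_atTop_zero
    refine squeeze_zero_norm' ?_ h3
    filter_upwards [Filter.eventually_gt_atTop 0] with r hr
    have hb := aux_rpow_le h0 h1 hr
    have hp : 0 < r ^ s := Real.rpow_pos_of_pos hr s
    have e : H r = -(r ^ s * r * r / (2 * (1 + r ^ 2) ^ 3)) := by
      simp only [hH]; ring
    rw [e, norm_neg, Real.norm_eq_abs, abs_of_nonneg (by positivity), inv_eq_one_div,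
      div_le_div_iff₀ (by positivity) hr]
    calc r ^ s * r * r * r ≤ (1 + r ^ 2) * r * r := by gcongr
      _ ≤ 1 * (2 * (1 + r ^ 2) ^ 3) := by
        nlinarith [sq_nonneg r, pow_pos hr 4, pow_pos hr 6]
  have key := integral_Ioi_of_hasDerivAt_of_tendsto hcH.continuousWithinAt hd (hfi.sub hgi) ht
  rw [integral_sub hfi hgi] at key
  have hH0 : H 0 = 0 := by simp [hH]
  have hgp : 0 < ∫ r in Set.Ioi (0 : ℝ), g r := by
    rw [setIntegral_pos_iff_support_of_nonneg_ae _ hgi]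
    · have : Set.Ioi (0 : ℝ) ⊆ Function.support g ∩ Set.Ioi 0 := by
        intro r hr
        refine ⟨?_, hr⟩
        have hr : 0 < r := hr
        have hp : 0 < r ^ s := Real.rpow_pos_of_pos hr s
        have : 0 < g r := by simp only [hg]; positivity
        exact this.ne'
      exact lt_of_lt_of_le (by simp) (measure_mono this)
    · refine (ae_restrict_iff' measurableSet_Ioi).2 (ae_of_all _ fun r hr => ?_)
      have hr : 0 < r := hr
      have hp : 0 < r ^ s := Real.rpow_pos_of_pos hr s
      simp only [hg, Pi.zero_apply]; positivity
  rw [hH0] at key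
  linarith

/-- For any integer `α ≥ 2`, `∫_{ℝ²} |y|^{2/α}(2|y|²-1)/(1+|y|²)⁴ dy > 0`. -/
theorem integral_rpow_kernel_pos (α : ℕ) (hα : 2 ≤ α) :
    0 < ∫ y : EuclideanSpace ℝ (Fin 2),
        ‖y‖ ^ ((2 : ℝ) / (α : ℝ)) * (2 * ‖y‖ ^ 2 - 1) / (1 + ‖y‖ ^ 2) ^ 4 := by
  have h2 : (2 : ℝ) ≤ α := by exact_mod_cast hα
  have h0 : 0 < (2 : ℝ) / α := by positivity
  have h1 : (2 : ℝ) / α ≤ 1 := by rw [div_le_one (by linarith)]; exact h2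
  have := aux_pos h0 h1
  rw [integral_fun_norm_addHaar (volume : Measure (EuclideanSpace ℝ (Fin 2)))
    (fun r : ℝ => r ^ ((2 : ℝ) / (α : ℝ)) * (2 * r ^ 2 - 1) / (1 + r ^ 2) ^ 4)]
  have hv : 0 < (volume : Measure (EuclideanSpace ℝ (Fin 2))).real (Metric.ball 0 1) :=
    ENNReal.toReal_pos (Metric.measure_ball_pos _ _ one_pos).ne' measure_ball_lt_top.ne
  simp only [finrank_euclideanSpace, Fintype.card_fin, nsmul_eq_mul, smul_eq_mul,
    Nat.add_one_sub_one, pow_one]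
  positivity
end
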